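/- In the monoid Q associated to the game 0.26, for every heap size k and every m ∈ ℕ with w(H_k) ≤ m, one has b^m · Φ(H_k) = a^{g(H_k)} · b^{m + t(H_k)}, where g(H_k) = (k-1) mod 4. -/

import Mathlib

/-!
The relation `b^(n+1) c_n = b^(2n+3)` says that a sufficiently high power of `b` turns `c_n`
into `b^(n+2)`: if `n + 1 ≤ m` then `b^m c_n = b^(m+n+2)` (`qb_pow_mul_qc`). The bound `w(H_k)` is
exactly what makes this applicable to the factor `c_n` of `Φ(H_k)`; for even `k ≥ 12` the
extra factor `b` of `Φ(H_k)` supplies one of the `n + 1` copies of `b`. What remains is to compare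
exponents of `b`, and exponents of `a` modulo 2, using `a² = 1`.
-/

/-- Generators of the misère quotient of 0.26: `a`, `b`, and `c n` for `n : ℕ`. -/
inductive Gen026 where
  | a : Gen026
  | b : Gen026
  | c : ℕ → Gen026

/-- The free commutative monoid on the generators, written multiplicatively. -/
abbrev FM026 := Multiplicative (Multiset Gen026)

/-- The generator `x` as an element of the free commutative monoid. -/
def fgen026 (x : Gen026) : FM026 := Multiplicative.ofAdd {x}

def fa : FM026 := fgen026 .a
def fb : FM026 := fgen026 .b
def fc (n : ℕ) : FM026 := fgen026 (.c n)

/-- The defining relations of the quotient `Q`: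
`a² = 1`, `b^(n+1) c_n = b^(2n+3)`, and `c_m c_n = b^(m+2) c_n` for `m ≤ n`. -/
def rel026 : FM026 → FM026 → Prop := fun x y =>
  (x = fa ^ 2 ∧ y = 1) ∨
  (∃ n : ℕ, x = fb ^ (n + 1) * fc n ∧ y = fb ^ (2 * n + 3)) ∨
  (∃ m n : ℕ, m ≤ n ∧ x = fc m * fc n ∧ y = fb ^ (m + 2) * fc n)

/-- The commutative monoid `Q` presented by generators `a`, `b`, `c_n` and the
relations `rel026`. -/
def Q026 : Type := (conGen rel026).Quotient

instance : CommMonoid Q026 := Con.commMonoid _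

/-- The image of `a` in `Q`. -/
def qa : Q026 := (conGen rel026).mk' fa
/-- The image of `b` in `Q`. -/
def qb : Q026 := (conGen rel026).mk' fb
/-- The image of `c_n` in `Q`. -/
def qc (n : ℕ) : Q026 := (conGen rel026).mk' (fc n)

/-- The P-portion `P = {a} ∪ {b^(2m) : m ≥ 1} ∪ {b^m c_n : m ≤ n, m + n odd}`. -/
def P026 : Set Q026 :=
  {x | x = qa} ∪
  {x | ∃ m : ℕ, 1 ≤ m ∧ x = qb ^ (2 * m)} ∪
  {x | ∃ m n : ℕ, m ≤ n ∧ (m + n) % 2 = 1 ∧ x = qb ^ m * qc n}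

/-- The pretending function on single heaps. -/
noncomputable def phi026 (k : ℕ) : Q026 :=
  if k ≤ 8 then
    (if k % 4 = 1 then 1 else if k % 4 = 2 then qa
     else if k % 4 = 3 then qb else qa * qb)
  else if k = 9 then qc 0
  else if k = 10 then qa * qc 0
  else if k % 2 = 1 then qc ((k - 9) / 2)
  else qa * qb * qc ((k - 12) / 2)

/-- The pretending function extended multiplicatively to positions. -/
noncomputable def Phi026 (G : Multiset ℕ) : Q026 := (G.map phi026).prod

/-- The function `t` on single heaps for 0.26. -/
def t026 (k : ℕ) : ℕ :=
  if k ≤ 2 then 0 else if k ≤ 4 then 1 else (k - 5) / 2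

/-- The function `w` on single heaps for 0.26. -/
def w026 (k : ℕ) : ℕ :=
  if k ≤ 8 then 0
  else if k ≤ 10 then 1
  else if k % 2 = 1 then (k - 7) / 2
  else (k - 12) / 2

theorem qa_sq : qa ^ 2 = 1 := by
  have h : (conGen rel026) (fa ^ 2) 1 := ConGen.Rel.of _ _ (Or.inl ⟨rfl, rfl⟩)
  exact (Con.eq _).2 h

theorem qb_pow_succ_mul_qc (n : ℕ) : qb ^ (n + 1) * qc n = qb ^ (2 * n + 3) := by
  have h : (conGen rel026) (fb ^ (n + 1) * fc n) (fb ^ (2 * n + 3)) :=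
    ConGen.Rel.of _ _ (Or.inr (Or.inl ⟨n, rfl, rfl⟩))
  exact (Con.eq _).2 h

theorem qb_pow_mul_qc {m n : ℕ} (h : n + 1 ≤ m) : qb ^ m * qc n = qb ^ (m + (n + 2)) := by
  obtain ⟨d, rfl⟩ := Nat.exists_eq_add_of_le' h
  rw [pow_add, mul_assoc, qb_pow_succ_mul_qc, ← pow_add]
  congr 1
  omega

theorem qa_pow_eq_mod_two (j : ℕ) : qa ^ j = qa ^ (j % 2) := by
  conv_lhs => rw [← Nat.div_add_mod j 2, pow_add, pow_mul, qa_sq, one_pow, one_mul]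

/-- For every heap size `k ≥ 1` and every `m ∈ ℕ` with `w(H_k) ≤ m`, one has
`b^m Φ(H_k) = a^(g(H_k)) b^(m + t(H_k))`, where `g(H_k) = (k-1) % 4`. -/
theorem phi026_absorb :
    ∀ k : ℕ, 1 ≤ k → ∀ m : ℕ, w026 k ≤ m →
      qb ^ m * phi026 k = qa ^ ((k - 1) % 4) * qb ^ (m + t026 k) := by
  intro k hk m hm
  rw [qa_pow_eq_mod_two]
  by_cases h8 : k ≤ 8
  · interval_cases k <;> simp [phi026, t026, pow_succ, mul_comm, mul_assoc]
  rcases Nat.even_or_odd' k with ⟨j, rfl | rfl⟩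
  · have hg : (2 * j - 1) % 4 % 2 = 1 := by omega
    rw [hg, pow_one]
    by_cases h10 : j = 5
    · subst h10
      have hm1 : 0 + 1 ≤ m := by simpa [w026] using hm
      have hphi : phi026 (2 * 5) = qa * qc 0 := by simp [phi026]
      rw [hphi, mul_left_comm, qb_pow_mul_qc hm1]
      rfl
    · obtain ⟨n, rfl⟩ : ∃ n, j = n + 6 := ⟨j - 6, by omega⟩
      have hw : n ≤ m := by
        unfold w026 at hm
        split_ifs at hm <;> omega
      have hphi : phi026 (2 * (n + 6)) = qa * qb * qc n := by
        have hn : (2 * (n + 6) - 12) / 2 = n := by omega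
        unfold phi026
        rw [if_neg h8, if_neg (by omega), if_neg (by omega), if_neg (by omega), hn]
      have ht : t026 (2 * (n + 6)) = n + 3 := by
        unfold t026
        split_ifs <;> omega
      -- Moving the factor `b` of `Φ(H_k)` into the power of `b` gives exponent `m + 1 ≥ n + 1`.
      have hb : qb ^ m * (qa * qb * qc n) = qa * (qb ^ (m + 1) * qc n) := by
        rw [pow_succ, mul_assoc qa, mul_left_comm, mul_assoc]
      rw [hphi, ht, hb, qb_pow_mul_qc (by omega)]
      congr 2
      omega
  · obtain ⟨n, rfl⟩ : ∃ n, j = n + 4 := ⟨j - 4, by omega⟩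
    have hg : (2 * (n + 4) + 1 - 1) % 4 % 2 = 0 := by omega
    have hw : n + 1 ≤ m := by
      unfold w026 at hm
      split_ifs at hm <;> omega
    have hphi : phi026 (2 * (n + 4) + 1) = qc n := by
      have hn : (2 * (n + 4) + 1 - 9) / 2 = n := by omega
      unfold phi026
      rw [if_neg h8, if_neg (by omega : ¬ 2 * (n + 4) + 1 = 10),
        if_pos (by omega : (2 * (n + 4) + 1) % 2 = 1), hn]
      split_ifs with h9
      · rw [show n = 0 by omega]
      · rfl
    have ht : t026 (2 * (n + 4) + 1) = n + 2 := by
      unfold t026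
      split_ifs <;> omega
    rw [hg, hphi, ht, pow_zero, one_mul, qb_pow_mul_qc hw]
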